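/- Let 4 ≤ p < q, n = p + q, and suppose 2p > q + 4. Every tree T ∈ 𝒯_n^{p,q} that is isomorphic to none of B_{p,q}^{0,0}, B_{p,q}^{0,1}, D_{p,q}^{0,1}, B_{p,q}^{2,0} satisfies T ≺_s B_{p,q}^{2,0}; that is, in this case B_{p,q}^{2,0} is the unique fourth last tree in the S-order among 𝒯_n^{p,q}. -/

import Mathlib

open SimpleGraph

open scoped Classical in
/-- The adjacency matrix of a simple graph, with real entries. -/
noncomputable def adjMat {V : Type*} [Fintype V] (G : SimpleGraph V) : Matrix V V ℝ :=
  Matrix.of fun a b => if G.Adj a b then 1 else 0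

/-- The `k`-th spectral moment `S_k(G) = tr(A(G)^k)`. -/
noncomputable def spectralMoment {V : Type*} [Fintype V] [DecidableEq V]
    (G : SimpleGraph V) (k : ℕ) : ℝ :=
  Matrix.trace (adjMat G ^ k)

/-- `SLt G₁ G₂` means `G₁ ≺_s G₂`: for some `k` with `1 ≤ k ≤ n - 1`,
`S_i(G₁) = S_i(G₂)` for all `i < k` and `S_k(G₁) < S_k(G₂)`. -/
def SLt {V : Type*} [Fintype V] [DecidableEq V] (G₁ G₂ : SimpleGraph V) : Prop :=
  ∃ k : ℕ, 1 ≤ k ∧ k ≤ Fintype.card V - 1 ∧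
    (∀ i < k, spectralMoment G₁ i = spectralMoment G₂ i) ∧
    spectralMoment G₁ k < spectralMoment G₂ k

/-- The tree `B_{p,q}^{k,l}` on `p + q` vertices: vertex `0 = u` is adjacent to `1 = v`
and to the `q - 1` vertices `2, …, q`; the distinguished neighbor `2` of `u` carries the
`k` pendant leaves `q+1, …, q+k`; the `l` neighbors `3, …, l+2` of `u` carry one pendant
leaf each (`q+k+j` is attached to `j+2` for `1 ≤ j ≤ l`); and `v` carries the
`p - k - l - 1` pendant leaves `q+k+l+1, …, p+q-1`. -/
def BTree (p q k l : ℕ) : SimpleGraph (Fin (p + q)) :=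
  SimpleGraph.fromRel (fun a b =>
    (a.val = 0 ∧ b.val = 1) ∨
    (a.val = 0 ∧ 2 ≤ b.val ∧ b.val ≤ q) ∨
    (a.val = 2 ∧ q + 1 ≤ b.val ∧ b.val ≤ q + k) ∨
    (q + k + 1 ≤ b.val ∧ b.val ≤ q + k + l ∧ a.val = b.val - (q + k) + 2) ∨
    (a.val = 1 ∧ q + k + l + 1 ≤ b.val))

/-- The tree `D_{p,q}^{k,l}` on `p + q` vertices: vertex `1 = v` is adjacent to `0 = u`
and to the `p - 1` vertices `2, …, p`; the distinguished neighbor `2` of `v` carries the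
`k` pendant leaves `p+1, …, p+k`; the `l` neighbors `3, …, l+2` of `v` carry one pendant
leaf each; and `u` carries the `q - k - l - 1` pendant leaves `p+k+l+1, …, p+q-1`. -/
def DTree (p q k l : ℕ) : SimpleGraph (Fin (p + q)) :=
  SimpleGraph.fromRel (fun a b =>
    (a.val = 0 ∧ b.val = 1) ∨
    (a.val = 1 ∧ 2 ≤ b.val ∧ b.val ≤ p) ∨
    (a.val = 2 ∧ p + 1 ≤ b.val ∧ b.val ≤ p + k) ∨
    (p + k + 1 ≤ b.val ∧ b.val ≤ p + k + l ∧ a.val = b.val - (p + k) + 2) ∨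
    (a.val = 0 ∧ p + k + l + 1 ≤ b.val))

/-- `T ∈ 𝒯_{p+q}^{p,q}`: `T` is a tree on `p + q` vertices with a `(p,q)`-bipartition. -/
def TreeBip (p q : ℕ) (G : SimpleGraph (Fin (p + q))) : Prop :=
  G.IsTree ∧ ∃ A : Finset (Fin (p + q)), A.card = p ∧
    ∀ ⦃x y : Fin (p + q)⦄, G.Adj x y → (x ∈ A ↔ y ∉ A)

/-! ### Spectral moments of graphs without short cycles -/

section Moments

open scoped Classical in
theorem adjMat_eq_adjMatrix {V : Type*} [Fintype V] (G : SimpleGraph V) :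
    adjMat G = G.adjMatrix ℝ := by
  ext a b
  simp [adjMat, adjMatrix_apply]

theorem spectralMoment_zero {V : Type*} [Fintype V] [DecidableEq V] (G : SimpleGraph V) :
    spectralMoment G 0 = Fintype.card V := by
  simp [spectralMoment]

theorem spectralMoment_one {V : Type*} [Fintype V] [DecidableEq V] (G : SimpleGraph V) :
    spectralMoment G 1 = 0 := by
  simp [spectralMoment, Matrix.trace, adjMat]

open scoped Classical in
theorem spectralMoment_two {V : Type*} [Fintype V] [DecidableEq V] (G : SimpleGraph V) :
    spectralMoment G 2 = ∑ v, (G.degree v : ℝ) := by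
  simp only [spectralMoment, pow_two, adjMat_eq_adjMatrix, Matrix.trace, Matrix.diag_apply]
  exact Finset.sum_congr rfl fun v _ => adjMatrix_mul_self_apply_self ..

theorem spectralMoment_three {V : Type*} [Fintype V] [DecidableEq V] (G : SimpleGraph V)
    (hG : ∀ a b c, G.Adj a b → G.Adj b c → ¬ G.Adj c a) : spectralMoment G 3 = 0 := by
  simp only [spectralMoment, pow_succ, pow_zero, one_mul, Matrix.trace, Matrix.diag_apply,
    Matrix.mul_apply]
  refine Finset.sum_eq_zero fun a _ => Finset.sum_eq_zero fun c _ => ?_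
  rw [Finset.sum_mul]
  refine Finset.sum_eq_zero fun b _ => ?_
  have := hG a b c
  simp only [adjMat, Matrix.of_apply]
  split_ifs <;> simp_all

open scoped Classical in
theorem adjMatrix_sq_apply_mul_self {V : Type*} [Fintype V] (G : SimpleGraph V)
    (hG : ∀ a b z w, G.Adj a z → G.Adj b z → G.Adj a w → G.Adj b w → a = b ∨ z = w)
    {a b : V} (hab : a ≠ b) :
    (G.adjMatrix ℝ * G.adjMatrix ℝ) a b * (G.adjMatrix ℝ * G.adjMatrix ℝ) a b =
      (G.adjMatrix ℝ * G.adjMatrix ℝ) a b := by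
  by_cases h : ∃ z, G.Adj a z ∧ G.Adj b z
  · obtain ⟨z, haz, hbz⟩ := h
    have : (G.adjMatrix ℝ * G.adjMatrix ℝ) a b = 1 := by
      rw [Matrix.mul_apply, Finset.sum_eq_single z]
      · simp [adjMatrix_apply, haz, hbz.symm]
      · intro w _ hw
        by_contra hne
        simp only [adjMatrix_apply, mul_ite, mul_one, mul_zero, ite_eq_right_iff, one_ne_zero,
          imp_false, not_forall, not_not, exists_prop] at hne
        rcases hG a b z w haz hbz hne.2 hne.1.symm with h | h
        · exact hab h
        · exact hw h.symm
      · simp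
    simp [this]
  · have : (G.adjMatrix ℝ * G.adjMatrix ℝ) a b = 0 := by
      rw [Matrix.mul_apply]
      refine Finset.sum_eq_zero fun z _ => ?_
      by_contra hne
      simp only [adjMatrix_apply, mul_ite, mul_one, mul_zero, ite_eq_right_iff, one_ne_zero,
        imp_false, not_forall, not_not, exists_prop] at hne
      exact h ⟨z, hne.2, hne.1.symm⟩
    simp [this]

open scoped Classical in
theorem spectralMoment_four {V : Type*} [Fintype V] [DecidableEq V] (G : SimpleGraph V)
    (hG : ∀ a b z w, G.Adj a z → G.Adj b z → G.Adj a w → G.Adj b w → a = b ∨ z = w) :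
    spectralMoment G 4 = 2 * ∑ v, (G.degree v : ℝ) ^ 2 - ∑ v, (G.degree v : ℝ) := by
  set M := G.adjMatrix ℝ * G.adjMatrix ℝ with hM
  have hsymm : ∀ a b, M b a = M a b := fun a b => by
    simp only [hM, Matrix.mul_apply]
    refine Finset.sum_congr rfl fun z _ => ?_
    simp only [adjMatrix_apply, G.adj_comm z]
    exact mul_comm _ _
  have hdiag : ∀ a, M a a = G.degree a := fun a => adjMatrix_mul_self_apply_self ..
  have hentry : ∀ a b, M a b * M b a =
      M a b + if a = b then ((G.degree a : ℝ) ^ 2 - G.degree a) else 0 := by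
    intro a b
    rw [hsymm a b]
    split_ifs with h
    · subst h
      rw [hdiag]; ring
    · rw [add_zero]
      exact adjMatrix_sq_apply_mul_self G hG h
  have hsum : ∑ a, ∑ b, M a b = ∑ v, (G.degree v : ℝ) ^ 2 := by
    have hrow : ∀ z, ∑ b, G.adjMatrix ℝ z b = G.degree z := fun z => by
      simp [adjMatrix_apply, Finset.sum_boole, degree, neighborFinset_eq_filter]
    have hcol : ∀ z, ∑ a, G.adjMatrix ℝ a z = G.degree z := fun z => by
      rw [← hrow]
      simp [adjMatrix_apply, G.adj_comm]
    simp only [hM, Matrix.mul_apply]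
    calc ∑ a, ∑ b, ∑ z, G.adjMatrix ℝ a z * G.adjMatrix ℝ z b
        = ∑ a, ∑ z, G.adjMatrix ℝ a z * G.degree z := by
          refine Finset.sum_congr rfl fun a _ => ?_
          rw [Finset.sum_comm]
          exact Finset.sum_congr rfl fun z _ => by rw [← Finset.mul_sum, hrow]
      _ = _ := by
          rw [Finset.sum_comm]
          exact Finset.sum_congr rfl fun z _ => by rw [← Finset.sum_mul, hcol, pow_two]
  have hpow : spectralMoment G 4 = ∑ a, ∑ b, M a b * M b a := by
    have : adjMat G ^ 4 = M * M := by
      rw [hM, ← adjMat_eq_adjMatrix, ← pow_two, ← pow_two, ← pow_mul]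
    rw [spectralMoment]
    convert congrArg Matrix.trace this using 1
    simp [Matrix.trace, Matrix.mul_apply]
  rw [hpow]
  simp only [hentry, Finset.sum_add_distrib, hsum]
  simp only [Finset.sum_ite_eq, Finset.mem_univ, if_true, Finset.sum_sub_distrib]
  ring

open scoped Classical in
theorem SLt_of_sum_sq_degree_lt {V : Type*} [Fintype V] [DecidableEq V] {G H : SimpleGraph V}
    (hcard : 5 ≤ Fintype.card V)
    (hG₃ : ∀ a b c, G.Adj a b → G.Adj b c → ¬ G.Adj c a)
    (hH₃ : ∀ a b c, H.Adj a b → H.Adj b c → ¬ H.Adj c a)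
    (hG₄ : ∀ a b z w, G.Adj a z → G.Adj b z → G.Adj a w → G.Adj b w → a = b ∨ z = w)
    (hH₄ : ∀ a b z w, H.Adj a z → H.Adj b z → H.Adj a w → H.Adj b w → a = b ∨ z = w)
    (hdeg : ∑ v, G.degree v = ∑ v, H.degree v)
    (hsq : ∑ v, G.degree v ^ 2 < ∑ v, H.degree v ^ 2) : SLt G H := by
  have hdeg' : ∑ v, (G.degree v : ℝ) = ∑ v, (H.degree v : ℝ) := by exact_mod_cast hdeg
  have hsq' : ∑ v, (G.degree v : ℝ) ^ 2 < ∑ v, (H.degree v : ℝ) ^ 2 := by exact_mod_cast hsq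
  refine ⟨4, by norm_num, by omega, fun i hi => ?_, ?_⟩
  · interval_cases i
    · simp only [spectralMoment_zero]
    · simp only [spectralMoment_one]
    · simpa only [spectralMoment_two] using hdeg'
    · rw [spectralMoment_three G hG₃, spectralMoment_three H hH₃]
  · rw [spectralMoment_four G hG₄, spectralMoment_four H hH₄]
    linarith

end Moments

/-! ### Trees of diameter at most four with at most three inner vertices -/

section ThreeStar

/-- Adjacency of the six vertex classes of a tree formed by a centre (class `0`), two of its
neighbours (classes `1` and `2`) and leaves attached to these three vertices
(classes `3`, `4` and `5` respectively). -/
def classAdj (i j : Fin 6) : Bool :=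
  (i, j) ∈ ([(0, 1), (1, 0), (0, 2), (2, 0), (0, 3), (3, 0), (1, 4), (4, 1), (2, 5), (5, 2)] :
    List (Fin 6 × Fin 6))

theorem classAdj_iff : ∀ i j, classAdj i j = true ↔
    ((i = 0 ∧ (j = 1 ∨ j = 2 ∨ j = 3)) ∨ (i = 1 ∧ j = 4) ∨ (i = 2 ∧ j = 5)) ∨
    ((j = 0 ∧ (i = 1 ∨ i = 2 ∨ i = 3)) ∨ (j = 1 ∧ i = 4) ∨ (j = 2 ∧ i = 5)) := by decide

open scoped Classical in
/-- `G` consists of a centre with two further neighbours, together with `r`, `s` and `t` leaves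
attached to these three vertices. -/
def IsThreeStar {V : Type*} [Fintype V] (G : SimpleGraph V) (r s t : ℕ) : Prop :=
  ∃ label : V → Fin 6, (∀ a b, G.Adj a b ↔ classAdj (label a) (label b)) ∧
    ∀ i, (Finset.univ.filter fun a => label a = i).card = ![1, 1, 1, r, s, t] i

open scoped Classical in
/-- The number of leaves at the centre follows from the other class sizes. -/
theorem IsThreeStar.of_label {V : Type*} [Fintype V] {G : SimpleGraph V} {r s t : ℕ}
    (label : V → Fin 6) (hadj : ∀ a b, G.Adj a b ↔ classAdj (label a) (label b))
    (hcard : Fintype.card V = 3 + r + s + t)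
    (h0 : (Finset.univ.filter fun a => label a = 0).card = 1)
    (h1 : (Finset.univ.filter fun a => label a = 1).card = 1)
    (h2 : (Finset.univ.filter fun a => label a = 2).card = 1)
    (h4 : (Finset.univ.filter fun a => label a = 4).card = s)
    (h5 : (Finset.univ.filter fun a => label a = 5).card = t) :
    IsThreeStar G r s t := by
  have htot : Fintype.card V = ∑ i, (Finset.univ.filter fun a => label a = i).card :=
    Finset.card_eq_sum_card_fiberwise (fun _ _ => by simp)
  simp only [Fin.sum_univ_six] at htot
  refine ⟨label, hadj, fun i => ?_⟩
  fin_cases i <;> simp <;> omega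

theorem IsThreeStar.nonempty_iso {V W : Type*} [Fintype V] [Fintype W] {G : SimpleGraph V}
    {H : SimpleGraph W} {r s t : ℕ} (hG : IsThreeStar G r s t) (hH : IsThreeStar H r s t) :
    Nonempty (G ≃g H) := by
  classical
  obtain ⟨f, hf, hfc⟩ := hG
  obtain ⟨g, hg, hgc⟩ := hH
  have key : ∀ i, Nonempty ({a // f a = i} ≃ {b // g b = i}) := fun i => by
    refine ⟨Fintype.equivOfCardEq ?_⟩
    rw [Fintype.card_subtype, Fintype.card_subtype, hfc, hgc]
  let e : V ≃ W := (Equiv.sigmaFiberEquiv f).symm.trans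
    ((Equiv.sigmaCongrRight fun i => (key i).some).trans (Equiv.sigmaFiberEquiv g))
  have he : ∀ a, g (e a) = f a := fun a => ((key (f a)).some ⟨a, rfl⟩).2
  refine ⟨⟨e, fun {a b} => ?_⟩⟩
  rw [hf, hg, he, he]

theorem IsThreeStar.no_triangle {V : Type*} [Fintype V] {G : SimpleGraph V}
    {r s t : ℕ} (hG : IsThreeStar G r s t) (a b c : V) (hab : G.Adj a b) (hbc : G.Adj b c) :
    ¬ G.Adj c a := by
  obtain ⟨f, hf, -⟩ := hG
  rw [hf] at *
  have : ∀ i j k : Fin 6, classAdj i j → classAdj j k → ¬ classAdj k i := by decide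
  exact this _ _ _ hab hbc

theorem IsThreeStar.no_four_cycle {V : Type*} [Fintype V] {G : SimpleGraph V}
    {r s t : ℕ} (hG : IsThreeStar G r s t) (a b z w : V) (haz : G.Adj a z) (hbz : G.Adj b z)
    (haw : G.Adj a w) (hbw : G.Adj b w) : a = b ∨ z = w := by
  obtain ⟨f, hf, hfc⟩ := hG
  rw [hf] at *
  have key : ∀ i k, classAdj i k → ∀ j, classAdj j k → ∀ l, classAdj i l → classAdj j l →
      (i = j ∧ i < 3) ∨ (k = l ∧ k < 3) := by decide
  have hinj : ∀ a b, f a = f b → f a < 3 → a = b := by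
    intro a b hab ha
    have h1 : ∀ i : Fin 6, i < 3 → ![1, 1, 1, r, s, t] i = 1 := by
      intro i hi
      fin_cases i <;> first | rfl | exact absurd hi (by decide)
    have hc := hfc (f a)
    rw [h1 _ ha] at hc
    exact Finset.card_le_one.mp hc.le a (by simp) b (by simp [hab])
  rcases key _ _ haz _ hbz _ haw hbw with h | h
  · exact Or.inl (hinj _ _ h.1 h.2)
  · exact Or.inr (hinj _ _ h.1 h.2)

open scoped Classical in
theorem IsThreeStar.sum_degree {V : Type*} [Fintype V] {G : SimpleGraph V}
    {r s t : ℕ} (hG : IsThreeStar G r s t) (φ : ℕ → ℕ) :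
    ∑ v, φ (G.degree v) = φ (r + 2) + φ (s + 1) + φ (t + 1) + (r + s + t) * φ 1 := by
  obtain ⟨f, hf, hfc⟩ := hG
  have hdeg : ∀ v, G.degree v = ![r + 2, s + 1, t + 1, 1, 1, 1] (f v) := by
    intro v
    have h1 : G.degree v =
        ∑ i, ((Finset.univ.filter fun a => f a = i).card * if classAdj (f v) i then 1 else 0) := by
      rw [degree, neighborFinset_eq_filter,
        Finset.card_eq_sum_card_fiberwise (f := f) (t := Finset.univ) (fun _ _ => by simp)]
      refine Finset.sum_congr rfl fun i _ => ?_
      rw [Finset.filter_filter]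
      simp only [hf]
      split_ifs with h
      · rw [mul_one]
        congr 1
        ext a
        simp only [Finset.mem_filter, Finset.mem_univ, true_and]
        exact ⟨fun h => h.2, fun h' => ⟨h' ▸ h, h'⟩⟩
      · rw [mul_zero, Finset.card_eq_zero, Finset.filter_eq_empty_iff]
        rintro a - ⟨h', rfl⟩
        exact h h'
    rw [h1]
    generalize f v = j
    simp only [hfc, Fin.sum_univ_six]
    fin_cases j <;> simp [classAdj] <;> ring
  have h2 : ∑ v, φ (G.degree v) =
      ∑ i, (Finset.univ.filter fun a => f a = i).card *
        φ (![r + 2, s + 1, t + 1, 1, 1, 1] i) := by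
    simp only [hdeg]
    rw [← Finset.sum_fiberwise (g := f)]
    refine Finset.sum_congr rfl fun i _ => ?_
    rw [Finset.sum_congr rfl (g := fun _ => φ (![r + 2, s + 1, t + 1, 1, 1, 1] i)),
      Finset.sum_const, smul_eq_mul]
    intro a ha
    rw [(Finset.mem_filter.mp ha).2]
  rw [h2]
  simp only [hfc, Fin.sum_univ_six]
  simp
  ring

theorem card_filter_val_mem_Ico {n : ℕ} (P : Fin n → Prop) [DecidablePred P] (lo hi : ℕ)
    (hhi : hi ≤ n) (hP : ∀ a, P a ↔ lo ≤ a.val ∧ a.val < hi) :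
    (Finset.univ.filter P).card = hi - lo := by
  rw [← Nat.card_Ico, ← Finset.card_map Fin.valEmbedding]
  congr 1
  ext a
  simp only [Finset.mem_map, Finset.mem_filter, Finset.mem_univ, true_and, hP,
    Fin.valEmbedding_apply, Finset.mem_Ico]
  exact ⟨fun ⟨b, hb, hba⟩ => hba ▸ hb, fun ha => ⟨⟨a, by omega⟩, ha, rfl⟩⟩

/-- Labelling of `Fin n` with centre `c`, its neighbours `x` and `y`, leaves of `y` in
`[m, m + t)` and leaves of `x` in `[m + t, n)`. -/
def intervalLabel (n c x y m t : ℕ) (a : Fin n) : Fin 6 :=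
  if a.val = c then 0 else if a.val = x then 1 else if a.val = y then 2
  else if a.val < m then 3 else if a.val < m + t then 5 else 4

theorem isThreeStar_of_intervalLabel {n c x y m t : ℕ} {G : SimpleGraph (Fin n)}
    (hcx : c ≠ x) (hcy : c ≠ y) (hxy : x ≠ y) (hc : c < m) (hx : x < m) (hy : y < m)
    (hm : m + t ≤ n)
    (hadj : ∀ a b, G.Adj a b ↔
      ((a.val = c ∧ b.val ≠ c ∧ b.val < m) ∨ (a.val = x ∧ m + t ≤ b.val) ∨
        (a.val = y ∧ m ≤ b.val ∧ b.val < m + t)) ∨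
      ((b.val = c ∧ a.val ≠ c ∧ a.val < m) ∨ (b.val = x ∧ m + t ≤ a.val) ∨
        (b.val = y ∧ m ≤ a.val ∧ a.val < m + t))) :
    IsThreeStar G (m - 3) (n - (m + t)) t := by
  have aux : ∀ a : Fin n, ∀ i : Fin 6, intervalLabel n c x y m t a = i ↔
      (a.val = c ∧ i = 0) ∨ (a.val = x ∧ i = 1) ∨ (a.val = y ∧ i = 2) ∨
      (a.val ≠ c ∧ a.val ≠ x ∧ a.val ≠ y ∧ a.val < m ∧ i = 3) ∨
      (m ≤ a.val ∧ a.val < m + t ∧ i = 5) ∨ (m + t ≤ a.val ∧ i = 4) := by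
    intro a i
    unfold intervalLabel
    split_ifs <;> constructor <;> intro h <;> omega
  refine IsThreeStar.of_label (intervalLabel n c x y m t) ?_ ?_ ?_ ?_ ?_ ?_ ?_
  · intro a b
    rw [hadj, classAdj_iff]
    have ha := (aux a _).mp rfl
    have hb := (aux b _).mp rfl
    generalize intervalLabel n c x y m t a = i at *
    generalize intervalLabel n c x y m t b = j at *
    clear aux hadj
    rcases ha with ha | ha | ha | ha | ha | ha <;> obtain ⟨ha, hi⟩ := ha <;>
      rcases hb with hb | hb | hb | hb | hb | hb <;> obtain ⟨hb, hj⟩ := hb <;>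
      omega
  · rw [Fintype.card_fin]; omega
  · rw [card_filter_val_mem_Ico _ c (c + 1) (by omega) (fun a => by rw [aux]; omega)]; omega
  · rw [card_filter_val_mem_Ico _ x (x + 1) (by omega) (fun a => by rw [aux]; omega)]; omega
  · rw [card_filter_val_mem_Ico _ y (y + 1) (by omega) (fun a => by rw [aux]; omega)]; omega
  · exact card_filter_val_mem_Ico _ (m + t) n le_rfl (fun a => by rw [aux]; omega)
  · rw [card_filter_val_mem_Ico _ m (m + t) (by omega) (fun a => by rw [aux]; omega)]; omega

theorem isThreeStar_BTree_zero_zero {p q : ℕ} (hp : 6 ≤ p) (hpq : p < q) :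
    IsThreeStar (BTree p q 0 0) (q - 2) (p - 1) 0 := by
  convert isThreeStar_of_intervalLabel (n := p + q) (c := 0) (x := 1) (y := 2) (m := q + 1)
    (t := 0) (G := BTree p q 0 0) ?_ ?_ ?_ ?_ ?_ ?_ ?_ ?_ using 1 <;> try omega
  intro a b
  simp only [BTree, fromRel_adj, ne_eq, Fin.ext_iff]
  omega

theorem isThreeStar_BTree_zero_one {p q : ℕ} (hp : 6 ≤ p) (hpq : p < q) :
    IsThreeStar (BTree p q 0 1) (q - 2) (p - 2) 1 := by
  convert isThreeStar_of_intervalLabel (n := p + q) (c := 0) (x := 1) (y := 3) (m := q + 1)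
    (t := 1) (G := BTree p q 0 1) ?_ ?_ ?_ ?_ ?_ ?_ ?_ ?_ using 1 <;> try omega
  intro a b
  simp only [BTree, fromRel_adj, ne_eq, Fin.ext_iff]
  omega

theorem isThreeStar_BTree_two_zero {p q : ℕ} (hp : 6 ≤ p) (hpq : p < q) :
    IsThreeStar (BTree p q 2 0) (q - 2) (p - 3) 2 := by
  convert isThreeStar_of_intervalLabel (n := p + q) (c := 0) (x := 1) (y := 2) (m := q + 1)
    (t := 2) (G := BTree p q 2 0) ?_ ?_ ?_ ?_ ?_ ?_ ?_ ?_ using 1 <;> try omega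
  intro a b
  simp only [BTree, fromRel_adj, ne_eq, Fin.ext_iff]
  omega

theorem isThreeStar_DTree_zero_one {p q : ℕ} (hp : 6 ≤ p) (hpq : p < q) :
    IsThreeStar (DTree p q 0 1) (p - 2) (q - 2) 1 := by
  convert isThreeStar_of_intervalLabel (n := p + q) (c := 1) (x := 0) (y := 3) (m := p + 1)
    (t := 1) (G := DTree p q 0 1) ?_ ?_ ?_ ?_ ?_ ?_ ?_ ?_ using 1 <;> try omega
  intro a b
  simp only [DTree, fromRel_adj, ne_eq, Fin.ext_iff]
  omega

end ThreeStar

/-! ### Sums of squares of natural numbers with prescribed sum -/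

section SumSq

/-- Natural numbers with sum `m` are `m - j, j, 0, …, 0` for some `j ≤ 2`, or else their sum of
squares is less than `(m - 2) ^ 2 + 2 ^ 2`. -/
theorem exists_pair_or_sum_sq_lt {α : Type*} [DecidableEq α] (S : Finset α) (e : α → ℕ) {m : ℕ}
    (hm : 5 ≤ m) (hS : 2 ≤ S.card) (hsum : ∑ a ∈ S, e a = m) :
    (∃ j ≤ 2, ∃ x ∈ S, ∃ y ∈ S, x ≠ y ∧ e x = m - j ∧ e y = j ∧
      (∀ z ∈ S, z ≠ x → z ≠ y → e z = 0) ∧ ∑ a ∈ S, e a ^ 2 = (m - j) ^ 2 + j ^ 2) ∨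
    ∑ a ∈ S, e a ^ 2 < (m - 2) ^ 2 + 2 ^ 2 := by
  have hne : S.Nonempty := Finset.card_pos.mp (by omega)
  obtain ⟨x, hx, hmax⟩ := S.exists_max_image e hne
  have hs1 := Finset.add_sum_erase S e hx
  have hs2 := Finset.add_sum_erase S (fun a => e a ^ 2) hx
  have hne' : (S.erase x).Nonempty :=
    Finset.card_pos.mp (by rw [Finset.card_erase_of_mem hx]; omega)
  obtain ⟨y, hy, hmaxy⟩ := (S.erase x).exists_max_image e hne'
  have hyS := Finset.mem_of_mem_erase hy
  have hyx := Finset.ne_of_mem_erase hy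
  have ht1 := Finset.add_sum_erase _ e hy
  have ht2 := Finset.add_sum_erase _ (fun a => e a ^ 2) hy
  have hbound : ∀ (U : Finset α) (M : ℕ), (∀ a ∈ U, e a ≤ M) →
      ∑ a ∈ U, e a ^ 2 ≤ M * ∑ a ∈ U, e a := by
    intro U M hU
    rw [Finset.mul_sum]
    refine Finset.sum_le_sum fun a ha => ?_
    rw [pow_two]
    exact Nat.mul_le_mul_right _ (hU a ha)
  set R := ∑ a ∈ (S.erase x).erase y, e a with hR
  have hexact : R = 0 → (∀ z ∈ S, z ≠ x → z ≠ y → e z = 0) ∧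
      ∑ a ∈ S, e a ^ 2 = e x ^ 2 + e y ^ 2 := by
    intro h
    have hz : ∀ z ∈ (S.erase x).erase y, e z = 0 := Finset.sum_eq_zero_iff.mp h
    refine ⟨fun z hzS hzx hzy => hz z (by simp [*]), ?_⟩
    rw [← hs2, ← ht2, Finset.sum_eq_zero (s := (S.erase x).erase y) fun z h => by simp [hz z h],
      add_zero]
  have hxm : e x + e y + R = m := by omega
  have hyx_le := hmax y hyS
  have hR2 : ∑ a ∈ (S.erase x).erase y, e a ^ 2 ≤ e y * R :=
    hbound _ _ fun a ha => hmaxy a (Finset.mem_of_mem_erase ha)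
  have hR0 : e y = 0 → R = 0 := fun h0 => Finset.sum_eq_zero fun a ha => by
    have := hmaxy a (Finset.mem_of_mem_erase ha)
    omega
  by_cases hcase : R = 0 ∧ e y ≤ 2
  · obtain ⟨hz, hsq⟩ := hexact hcase.1
    left
    have hex : e x = m - e y := by omega
    exact ⟨e y, hcase.2, x, hx, y, hyS, hyx.symm, hex, rfl, hz, by rw [hsq, hex]⟩
  · right
    obtain ⟨k, rfl⟩ : ∃ k, m = k + 5 := ⟨m - 5, by omega⟩
    have e1 : k + 5 - 2 = k + 3 := by omega
    rw [e1]
    have hY : 1 ≤ e y := by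
      by_contra h
      exact hcase ⟨hR0 (by omega), by omega⟩
    suffices e x ^ 2 + e y ^ 2 + e y * R < (k + 3) ^ 2 + 2 ^ 2 by omega
    have hk : (k + 3 : ℤ) = e x + e y + R - 2 := by omega
    zify
    rw [hk]
    zify at hY hyx_le
    rcases Nat.eq_zero_or_pos R with hR' | hR'
    · have hY3 : (3 : ℤ) ≤ e y := by
        have : ¬ e y ≤ 2 := fun h => hcase ⟨hR', h⟩
        omega
      rw [hR']
      push_cast
      nlinarith [mul_nonneg (sub_nonneg.mpr hY3) (sub_nonneg.mpr (hY3.trans hyx_le))]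
    · have hR1 : (1 : ℤ) ≤ R := by exact_mod_cast hR'
      generalize (R : ℤ) = r at *
      generalize (e x : ℤ) = X at *
      generalize (e y : ℤ) = Y at *
      have h1 : 0 ≤ (X - Y) * (Y + r - 2) := mul_nonneg (by linarith) (by linarith)
      have h2 : 0 ≤ (Y - 1) * (r - 1) := mul_nonneg (by linarith) (by linarith)
      nlinarith [sq_nonneg (Y - 1), sq_nonneg (r - 1)]

theorem sq_sub_add_sq_le {m i j : ℕ} (hij : i ≤ j) (hj : 2 * j ≤ m) :
    (m - j) ^ 2 + j ^ 2 ≤ (m - i) ^ 2 + i ^ 2 := by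
  obtain ⟨a, rfl⟩ : ∃ a, m = 2 * j + a := ⟨m - 2 * j, by omega⟩
  obtain ⟨d, rfl⟩ := Nat.exists_eq_add_of_le hij
  rw [show 2 * (i + d) + a - (i + d) = i + d + a by omega,
    show 2 * (i + d) + a - i = i + 2 * d + a by omega]
  nlinarith [Nat.zero_le (d * a), Nat.zero_le (d * d)]

end SumSq

/-! ### Bipartite trees with a vertex joined to the whole opposite class -/

section Tree

theorem SimpleGraph.IsAcyclic.eq_or_eq_of_adj {V : Type*} {G : SimpleGraph V} (hG : G.IsAcyclic)
    (a b z w : V) (haz : G.Adj a z) (hbz : G.Adj b z) (haw : G.Adj a w) (hbw : G.Adj b w) :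
    a = b ∨ z = w := by
  by_contra! hne
  have hpath : ∀ v (ha : G.Adj a v) (hb : G.Adj b v),
      (Walk.cons ha (Walk.cons hb.symm Walk.nil)).IsPath := by
    intro v ha hb
    simp [Walk.cons_isPath_iff, ha.ne, hb.ne', hne.1]
  have := (hG.subsingleton_path a b).elim ⟨_, hpath z haz hbz⟩ ⟨_, hpath w haw hbw⟩
  simp only [Subtype.mk.injEq, Walk.cons.injEq] at this
  exact hne.2 this.1

open scoped Classical in
theorem isThreeStar_of_degree {V : Type*} [Fintype V] [DecidableEq V] {G : SimpleGraph V}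
    {C : Finset V}
    (hC : ∀ x y, G.Adj x y → (x ∈ C ↔ y ∉ C)) {c x y : V} (hcC : c ∈ C)
    (hc : G.degree c = Cᶜ.card) (hC1 : ∀ z ∈ C, z ≠ c → G.degree z = 1)
    (hx : x ∉ C) (hy : y ∉ C) (hxy : x ≠ y) (hO1 : ∀ z, z ∉ C → z ≠ x → z ≠ y → G.degree z = 1)
    {r s t : ℕ} (hs : G.degree x = s + 1) (ht : G.degree y = t + 1)
    (hcard : Fintype.card V = 3 + r + s + t) : IsThreeStar G r s t := by
  have hcx : c ≠ x := fun h => hx (h ▸ hcC)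
  have hcy : c ≠ y := fun h => hy (h ▸ hcC)
  have hcadj : ∀ z, z ∉ C → G.Adj c z := by
    have hsub : G.neighborFinset c ⊆ Cᶜ := fun z hz => by
      rw [mem_neighborFinset] at hz
      simpa using (hC _ _ hz).mp hcC
    have heq := Finset.eq_of_subset_of_card_le hsub hc.ge
    intro z hz
    rw [← mem_neighborFinset, heq]
    simpa using hz
  have huniq : ∀ z v w, G.degree z = 1 → G.Adj z v → G.Adj z w → v = w := by
    intro z v w hz hv hw
    exact Finset.card_le_one.mp hz.le v (by simpa using hv) w (by simpa using hw)
  have hmem : ∀ z ∈ C, z ≠ c → (G.Adj x z ∧ ¬ G.Adj y z) ∨ (¬ G.Adj x z ∧ G.Adj y z) := by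
    intro z hz hzc
    have hz1 := hC1 z hz hzc
    obtain ⟨w, hw⟩ : ∃ w, G.Adj z w := by
      rw [← G.degree_pos_iff_exists_adj]; omega
    have hwC := (hC _ _ hw).mp hz
    by_cases hwx : w = x
    · subst hwx
      exact Or.inl ⟨hw.symm, fun h => hxy (huniq z _ _ hz1 hw h.symm)⟩
    by_cases hwy : w = y
    · subst hwy
      exact Or.inr ⟨fun h => hxy (huniq z _ _ hz1 h.symm hw), hw.symm⟩
    exact absurd (huniq w _ _ (hO1 w hwC hwx hwy) hw.symm (hcadj w hwC).symm) hzc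
  have hother : ∀ z v, z ∉ C → z ≠ x → z ≠ y → G.Adj z v → v = c := fun z v hz hzx hzy hv =>
    huniq z _ _ (hO1 z hz hzx hzy) hv (hcadj z hz).symm
  let label : V → Fin 6 := fun z => if z = c then 0 else if z = x then 1 else if z = y then 2
    else if z ∉ C then 3 else if G.Adj x z then 4 else 5
  have hleaves : ∀ w, w ∉ C →
      (Finset.univ.filter fun z => z ≠ c ∧ G.Adj w z).card + 1 = G.degree w := by
    intro w hw
    have : (Finset.univ.filter fun z => z ≠ c ∧ G.Adj w z) = (G.neighborFinset w).erase c := by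
      ext z; simp
    rw [this, degree]
    exact Finset.card_erase_add_one (by simpa using (hcadj w hw).symm)
  have hlabel : ∀ z, (z = c ∧ label z = 0) ∨ (z = x ∧ label z = 1) ∨ (z = y ∧ label z = 2) ∨
      (z ≠ x ∧ z ≠ y ∧ z ∉ C ∧ label z = 3) ∨
      (z ≠ c ∧ z ∈ C ∧ G.Adj x z ∧ ¬ G.Adj y z ∧ label z = 4) ∨
      (z ≠ c ∧ z ∈ C ∧ ¬ G.Adj x z ∧ G.Adj y z ∧ label z = 5) := by
    intro z
    have hz := hmem z
    simp only [label]
    clear hO1 hs ht hcard hC hC1 hcadj huniq hmem hother hleaves hc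
    split_ifs <;> simp_all
  clear_value label
  have hfiber : ∀ (i : Fin 6) (v : V), (∀ z, label z = i ↔ z = v) →
      (Finset.univ.filter fun z => label z = i).card = 1 := by
    intro i v hv
    simp only [hv]
    exact Finset.card_eq_one.mpr ⟨v, by ext; simp⟩
  refine IsThreeStar.of_label label ?_ hcard (hfiber 0 c ?_) (hfiber 1 x ?_) (hfiber 2 y ?_) ?_ ?_
  · intro a b
    have ha := hlabel a
    have hb := hlabel b
    have hab := hC a b
    have hab₁ := hother a b
    have hba₁ := hother b a
    have hca := hcadj a
    have hcb := hcadj b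
    have hcomm := G.adj_comm a b
    have hac := G.adj_comm a c
    have hbx := G.adj_comm a x
    have hby := G.adj_comm a y
    rw [classAdj_iff]
    clear hO1 hs ht hcard hC hC1 hcadj huniq hmem hother hleaves hc hfiber hlabel
    generalize label a = i at *
    generalize label b = j at *
    rcases ha with ha | ha | ha | ha | ha | ha <;>
      rcases hb with hb | hb | hb | hb | hb | hb <;>
      first | (simp_all; done) | grind
  · intro z
    have hz := hlabel z
    clear hlabel hfiber
    grind
  · intro z
    have hz := hlabel z
    clear hlabel hfiber
    grind
  · intro z
    have hz := hlabel z
    clear hlabel hfiber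
    grind
  · have := hleaves x hx
    rw [hs, Nat.add_right_cancel_iff] at this
    rw [← this]
    congr 1
    ext z
    have hxz := hC x z
    have hz := hlabel z
    simp only [Finset.mem_filter, Finset.mem_univ, true_and]
    clear hO1 hs ht hcard hC hC1 hcadj huniq hmem hother hleaves hc hfiber hlabel
    grind
  · have := hleaves y hy
    rw [ht, Nat.add_right_cancel_iff] at this
    rw [← this]
    congr 1
    ext z
    have hyz := hC y z
    have hz := hlabel z
    simp only [Finset.mem_filter, Finset.mem_univ, true_and]
    clear hO1 hs ht hcard hC hC1 hcadj huniq hmem hother hleaves hc hfiber hlabel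
    grind

end Tree

/-! ### The comparison -/

section Main

open scoped Classical in
theorem isThreeStar_of_excess {V : Type*} [Fintype V] [DecidableEq V] {G : SimpleGraph V}
    {C : Finset V}
    (hC : ∀ x y, G.Adj x y → (x ∈ C ↔ y ∉ C)) (hpos : ∀ v, 0 < G.degree v)
    {c c' x y : V} {m : ℕ} (hcC : c ∈ C) (hc : G.degree c - 1 = Cᶜ.card - 1)
    (hO : 0 < Cᶜ.card)
    (hc' : G.degree c' - 1 = 0)
    (hC1 : ∀ z ∈ C, z ≠ c → z ≠ c' → G.degree z - 1 = 0)
    (hx : x ∈ Cᶜ) (hy : y ∈ Cᶜ) (hxy : x ≠ y)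
    (hO1 : ∀ z ∈ Cᶜ, z ≠ x → z ≠ y → G.degree z - 1 = 0)
    {r s t : ℕ} (hs : G.degree x - 1 = s) (ht : G.degree y - 1 = t) (hst : s + t = m)
    (hcard : Fintype.card V = 3 + r + m) : IsThreeStar G r s t := by
  have hone : ∀ z, G.degree z - 1 = 0 → G.degree z = 1 := fun z hz => by
    have := hpos z
    omega
  have := hpos c
  have := hpos x
  have := hpos y
  refine isThreeStar_of_degree hC hcC (by omega) (fun z hz hzc => ?_) (by simpa using hx)
    (by simpa using hy) hxy (fun z hz h1 h2 => hone z (hO1 z (by simpa using hz) h1 h2))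
    (by omega) (by omega) (by omega)
  by_cases hzc' : z = c'
  · exact hone z (hzc' ▸ hc')
  · exact hone z (hC1 z hz hzc hzc')

open scoped Classical in
/-- In a bipartite tree the excesses `deg v - 1` over one colour class sum to one less than the
size of the other class. -/
theorem sum_excess_of_isTree {V : Type*} [Fintype V] [DecidableEq V] {G : SimpleGraph V}
    (hG : G.IsTree)
    (hpos : ∀ v, 0 < G.degree v) {C : Finset V} (hC : ∀ x y, G.Adj x y → (x ∈ C ↔ y ∉ C)) :
    ∑ v ∈ C, (G.degree v - 1) + 1 = Cᶜ.card := by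
  have hbip : G.IsBipartiteWith (C : Set V) ((Cᶜ : Finset V) : Set V) := by
    refine ⟨by rw [Finset.disjoint_coe]; exact disjoint_compl_right, fun v w h => ?_⟩
    have := hC v w h
    simp only [Finset.mem_coe, Finset.mem_compl]
    tauto
  have h1 : ∑ v ∈ C, G.degree v = G.edgeFinset.card := by
    convert isBipartiteWith_sum_degrees_eq_card_edges hbip
  have h2 : G.edgeFinset.card + 1 = Fintype.card V := by convert hG.card_edgeFinset
  have h3 : ∑ v ∈ C, G.degree v = ∑ v ∈ C, (G.degree v - 1) + C.card := by
    rw [Finset.card_eq_sum_ones, ← Finset.sum_add_distrib]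
    exact Finset.sum_congr rfl fun v _ => (Nat.sub_add_cancel (hpos v)).symm
  have h4 := Finset.card_add_card_compl C
  omega

open scoped Classical in
theorem sum_degree_eq_sum_excess {V : Type*} [Fintype V] {G : SimpleGraph V}
    (hpos : ∀ v, 0 < G.degree v) :
    ∑ v, G.degree v = ∑ v, (G.degree v - 1) + Fintype.card V := by
  rw [← Finset.card_univ, Finset.card_eq_sum_ones, ← Finset.sum_add_distrib]
  exact Finset.sum_congr rfl fun v _ => (Nat.sub_add_cancel (hpos v)).symm

open scoped Classical in
theorem sum_sq_degree_eq_sum_sq_excess {V : Type*} [Fintype V] {G : SimpleGraph V}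
    (hpos : ∀ v, 0 < G.degree v) :
    ∑ v, G.degree v ^ 2 =
      ∑ v, (G.degree v - 1) ^ 2 + 2 * ∑ v, (G.degree v - 1) + Fintype.card V := by
  rw [← Finset.card_univ, Finset.card_eq_sum_ones, Finset.mul_sum, ← Finset.sum_add_distrib,
    ← Finset.sum_add_distrib]
  refine Finset.sum_congr rfl fun v _ => ?_
  obtain ⟨k, hk⟩ : ∃ k, G.degree v = k + 1 := ⟨G.degree v - 1, by have := hpos v; omega⟩
  rw [hk, Nat.add_sub_cancel]
  ring

open scoped Classical in
/-- Among the trees with colour classes of sizes `P + 6` and `P + Q + 7`, all but four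
have a sum of squared excesses below that of `B^{2,0}`. -/
theorem sum_sq_excess_lt {V : Type*} [Fintype V] [DecidableEq V] {T : SimpleGraph V} {P Q : ℕ}
    (hTree : T.IsTree) (hpos : ∀ v, 0 < T.degree v) {A : Finset V}
    (hcol : ∀ x y, T.Adj x y → (x ∈ A ↔ y ∉ A))
    (hA : A.card = P + 6) (hA' : Aᶜ.card = P + Q + 7)
    (h0 : ¬ IsThreeStar T (P + Q + 5) (P + 5) 0) (h1 : ¬ IsThreeStar T (P + Q + 5) (P + 4) 1)
    (h2 : ¬ IsThreeStar T (P + 4) (P + Q + 5) 1) (h3 : ¬ IsThreeStar T (P + Q + 5) (P + 3) 2) :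
    ∑ v ∈ A, (T.degree v - 1) ^ 2 + ∑ v ∈ Aᶜ, (T.degree v - 1) ^ 2 <
      (P + Q + 6) ^ 2 + (P + 3) ^ 2 + 4 := by
  have hcol' : ∀ x y, T.Adj x y → (x ∈ Aᶜ ↔ y ∉ Aᶜ) := fun x y hxy => by
    have := hcol x y hxy
    simp only [Finset.mem_compl]
    tauto
  have hcard := Finset.card_add_card_compl A
  have hsumA := sum_excess_of_isTree hTree hpos hcol
  have hsumB := sum_excess_of_isTree hTree hpos hcol'
  rw [compl_compl] at hsumB
  have hdA := exists_pair_or_sum_sq_lt A (fun v => T.degree v - 1) (m := P + Q + 6) (by omega)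
    (by omega) (by omega)
  have hdB := exists_pair_or_sum_sq_lt Aᶜ (fun v => T.degree v - 1) (m := P + 5) (by omega)
    (by omega) (by omega)
  simp only [show P + Q + 6 - 2 = P + Q + 4 by omega, show P + 5 - 2 = P + 3 by omega] at hdA hdB
  rcases hdA with ⟨j, hj, x, hx, y, hy, hxy, hex, hey, hez, hsqA⟩ | hltA <;>
    rcases hdB with ⟨k, hk, x', hx', y', hy', hxy', hex', hey', hez', hsqB⟩ | hltB
  · by_cases hj0 : j = 0
    · subst hj0
      have hstar : IsThreeStar T (P + Q + 5) (P + 5 - k) k :=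
        isThreeStar_of_excess hcol hpos hx (by omega) (by omega) hey hez hx' hy' hxy' hez'
          hex' hey' (m := P + 5) (by omega) (by omega)
      interval_cases k
      · exact absurd hstar h0
      · exact absurd hstar h1
      · exact absurd hstar h3
    by_cases hk0 : k = 0
    · subst hk0
      have hstar : IsThreeStar T (P + 4) (P + Q + 6 - j) j :=
        isThreeStar_of_excess (C := Aᶜ) hcol' hpos hx' (by rw [compl_compl]; omega)
          (by rw [compl_compl]; omega) hey' hez' (by simpa using hx)
          (by simpa using hy) hxy (by simpa using hez) hex hey (m := P + Q + 6) (by omega)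
          (by omega)
      interval_cases j
      · omega
      · exact absurd hstar h2
      · rw [hsqA, hsqB]
        simp only [show P + Q + 6 - 2 = P + Q + 4 by omega, Nat.sub_zero]
        linarith
    · have hj' := sq_sub_add_sq_le (m := P + Q + 6) (i := 1) (j := j) (by omega) (by omega)
      have hk' := sq_sub_add_sq_le (m := P + 5) (i := 1) (j := k) (by omega) (by omega)
      simp only [show P + Q + 6 - 1 = P + Q + 5 by omega, show P + 5 - 1 = P + 4 by omega]
        at hj' hk'
      rw [hsqA, hsqB]
      linarith
  · have hj' := sq_sub_add_sq_le (m := P + Q + 6) (i := 0) (j := j) (by omega) (by omega)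
    rw [Nat.sub_zero] at hj'
    linarith
  · have hk' := sq_sub_add_sq_le (m := P + 5) (i := 0) (j := k) (by omega) (by omega)
    rw [Nat.sub_zero] at hk'
    linarith
  · linarith

/-- For `4 ≤ p < q`, `n = p + q` and `2p > q + 4`, every tree
`T ∈ 𝒯_n^{p,q}` isomorphic to none of `B_{p,q}^{0,0}`, `B_{p,q}^{0,1}`,
`D_{p,q}^{0,1}`, `B_{p,q}^{2,0}` satisfies `T ≺_s B_{p,q}^{2,0}`: in this case
`B_{p,q}^{2,0}` is the unique fourth last tree in the S-order among `𝒯_n^{p,q}`. -/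
theorem stmt_7 (p q : ℕ) (hp : 4 ≤ p) (hpq : p < q) (h : q + 4 < 2 * p)
    (T : SimpleGraph (Fin (p + q))) (hT : TreeBip p q T)
    (h0 : ¬ Nonempty (T ≃g BTree p q 0 0))
    (h1 : ¬ Nonempty (T ≃g BTree p q 0 1))
    (h2 : ¬ Nonempty (T ≃g DTree p q 0 1))
    (h3 : ¬ Nonempty (T ≃g BTree p q 2 0)) :
    SLt T (BTree p q 2 0) := by
  classical
  obtain ⟨hTree, A, hA, hcol⟩ := hT
  have hp6 : 6 ≤ p := by omega
  have hcard : Fintype.card (Fin (p + q)) = p + q := Fintype.card_fin _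
  have hA' : Aᶜ.card = q := by rw [Finset.card_compl, hcard]; omega
  have : Nontrivial (Fin (p + q)) := Fintype.one_lt_card_iff_nontrivial.mp (by omega)
  have hpos : ∀ v, 0 < T.degree v := fun v => by
    convert hTree.connected.preconnected.degree_pos_of_nontrivial v
  have hB := isThreeStar_BTree_two_zero hp6 hpq
  have hB0 : ¬ IsThreeStar T (q - 2) (p - 1) 0 := fun hs =>
    h0 (hs.nonempty_iso (isThreeStar_BTree_zero_zero hp6 hpq))
  have hB1 : ¬ IsThreeStar T (q - 2) (p - 2) 1 := fun hs =>
    h1 (hs.nonempty_iso (isThreeStar_BTree_zero_one hp6 hpq))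
  have hD1 : ¬ IsThreeStar T (p - 2) (q - 2) 1 := fun hs =>
    h2 (hs.nonempty_iso (isThreeStar_DTree_zero_one hp6 hpq))
  have hB2 : ¬ IsThreeStar T (q - 2) (p - 3) 2 := fun hs => h3 (hs.nonempty_iso hB)
  have hBdeg := hB.sum_degree (fun d => d)
  have hBsq := hB.sum_degree (fun d => d ^ 2)
  have hdeg : ∑ v, T.degree v = 2 * T.edgeFinset.card := by
    convert T.sum_degrees_eq_twice_card_edges
  have hedge : T.edgeFinset.card + 1 = Fintype.card (Fin (p + q)) := by
    convert hTree.card_edgeFinset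
  have hexc := sum_degree_eq_sum_excess hpos
  have hsq := sum_sq_degree_eq_sum_sq_excess hpos
  refine SLt_of_sum_sq_degree_lt (by omega)
    (fun a b c hab hbc hca => ?_) hB.no_triangle
    hTree.isAcyclic.eq_or_eq_of_adj hB.no_four_cycle ?_ ?_
  · have := hcol hab
    have := hcol hbc
    have := hcol hca
    tauto
  · omega
  rw [hsq, hBsq, ← Finset.sum_add_sum_compl A (fun v => (T.degree v - 1) ^ 2)]
  have hexc' : ∑ v, (T.degree v - 1) = p + q - 2 := by omega
  rw [hexc', hcard]
  obtain ⟨P, hP⟩ : ∃ P, p = P + 6 := ⟨p - 6, by omega⟩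
  obtain ⟨Q, hQ⟩ : ∃ Q, q = P + Q + 7 := ⟨q - (P + 7), by omega⟩
  have e1 : q - 2 = P + Q + 5 := by omega
  have e2 : p - 1 = P + 5 := by omega
  have e3 : p - 2 = P + 4 := by omega
  have e4 : p - 3 = P + 3 := by omega
  have e5 : p + q - 2 = 2 * P + Q + 11 := by omega
  rw [e1, e2] at hB0
  rw [e1, e3] at hB1
  rw [e1, e3] at hD1
  rw [e1, e4] at hB2
  have key := sum_sq_excess_lt hTree hpos (fun x y => @hcol x y) (hA.trans hP) (hA'.trans hQ)
    hB0 hB1 hD1 hB2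
  rw [e1, e4, e5]
  linarith

end Main
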